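/- arXiv:0805.3272 — 4 statements merged into one kernel-verified Lean document; each statement's English description precedes it below -/
import Mathlib

section
/- For every h > 0 the semi-discrete scheme operator T_h is a contraction in the supremum norm with factor e^{-h c₀}: for all bounded Borel functions w, w̃ : ℝ^N → ℝ one has sup_{x∈ℝ^N} |(T_h w)(x) − (T_h w̃)(x)| ≤ e^{-h c₀} · sup_{x∈ℝ^N} |w(x) − w̃(x)|. -/
open MeasureTheory

noncomputable section

abbrev Euc (n : ℕ) : Type := EuclideanSpace ℝ (Fin n)

/-- The semi-discrete scheme operator `T_h` of the semi-Lagrangian scheme. -/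
noncomputable def schemeT {N M d : ℕ} {V : Type*}
    (σ : Euc N → V → Fin d → Euc N) (b : Euc N → V → Euc N)
    (c f : Euc N → V → ℝ) (η : Euc N → V → Euc M → Euc N)
    (ν : Measure (Euc M)) (h : ℝ) (w : Euc N → ℝ) (x : Euc N) : ℝ :=
  ⨅ v : V, h * f x v + Real.exp (-(h * c x v)) *
      ((Real.exp (-(h * (ν Set.univ).toReal)) / (2 * (d : ℝ))) *
        ∑ m : Fin d, (w (x + h • b x v + Real.sqrt h • σ x v m) +
          w (x + h • b x v - Real.sqrt h • σ x v m)) +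
       ((1 - Real.exp (-(h * (ν Set.univ).toReal))) / (ν Set.univ).toReal) *
        ∫ z, w (x + η x v z) ∂ν)

/-!
For a fixed control the scheme evaluates `w` through a mean: a convex combination, with weights
`e^{-hλ}` and `1 - e^{-hλ}`, of an average over the `2d` diffusion points and an average over the
jumps. A mean does not increase the supremum norm, discounting multiplies it by
`e^{-h c} ≤ e^{-h c₀}`, and an infimum over controls is nonexpansive.
-/

open scoped BigOperators

section Infimum

variable {ι α : Type*} [Nonempty ι]

lemma ciInf_le_ciInf_add [AddCommGroup α] [ConditionallyCompleteLattice α] [AddLeftMono α]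
    {u u' : ι → α} {D : α} (hu : BddBelow (Set.range u)) (huu' : ∀ i, u i ≤ u' i + D) :
    ⨅ i, u i ≤ (⨅ i, u' i) + D :=
  sub_le_iff_le_add.mp <| le_ciInf fun i =>
    sub_le_iff_le_add.mpr <| (ciInf_le hu i).trans (huu' i)

lemma abs_ciInf_sub_ciInf_le [AddCommGroup α] [ConditionallyCompleteLinearOrder α]
    [IsOrderedAddMonoid α] {u u' : ι → α} {D : α} (hu : BddBelow (Set.range u))
    (huu' : ∀ i, |u i - u' i| ≤ D) :
    |(⨅ i, u i) - ⨅ i, u' i| ≤ D := by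
  have u_le : ∀ i, u i ≤ u' i + D := fun i =>
    sub_le_iff_le_add'.mp (abs_sub_le_iff.mp (huu' i)).1
  have u'_le : ∀ i, u' i ≤ u i + D := fun i =>
    sub_le_iff_le_add'.mp (abs_sub_le_iff.mp (huu' i)).2
  have hu' : BddBelow (Set.range u') := by
    obtain ⟨L, hL⟩ := hu
    refine ⟨L - D, Set.forall_mem_range.mpr fun i => ?_⟩
    exact sub_le_iff_le_add.mpr ((hL ⟨i, rfl⟩).trans (u_le i))
  exact abs_sub_le_iff.mpr
    ⟨sub_le_iff_le_add'.mpr (ciInf_le_ciInf_add hu u_le),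
      sub_le_iff_le_add'.mpr (ciInf_le_ciInf_add hu' u'_le)⟩

end Infimum

section Discount

variable {ι : Type*} {k γ A A' : ι → ℝ} {Γ C D : ℝ}

lemma abs_mul_le_mul_of_mem_Icc {a g : ℝ} (hg : g ∈ Set.Icc 0 Γ) (ha : |a| ≤ D) :
    |g * a| ≤ Γ * D := by
  rw [abs_mul, abs_of_nonneg hg.1]
  exact mul_le_mul hg.2 ha (abs_nonneg a) (hg.1.trans hg.2)

lemma bddBelow_range_add_mul (hk : BddBelow (Set.range k)) (hγ : ∀ i, γ i ∈ Set.Icc 0 Γ)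
    (hA : ∀ i, |A i| ≤ C) : BddBelow (Set.range fun i => k i + γ i * A i) := by
  obtain ⟨L, hL⟩ := hk
  refine ⟨L + -(Γ * C), Set.forall_mem_range.mpr fun i => ?_⟩
  exact add_le_add (hL ⟨i, rfl⟩) (neg_le_of_abs_le (abs_mul_le_mul_of_mem_Icc (hγ i) (hA i)))

lemma abs_iInf_add_mul_sub_iInf_add_mul_le [Nonempty ι] (hk : BddBelow (Set.range k))
    (hγ : ∀ i, γ i ∈ Set.Icc 0 Γ) (hA : ∀ i, |A i| ≤ C) (hAA' : ∀ i, |A i - A' i| ≤ D) :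
    |(⨅ i, k i + γ i * A i) - ⨅ i, k i + γ i * A' i| ≤ Γ * D := by
  refine abs_ciInf_sub_ciInf_le (bddBelow_range_add_mul hk hγ hA) fun i => ?_
  rw [add_sub_add_left_eq_sub, ← mul_sub]
  exact abs_mul_le_mul_of_mem_Icc (hγ i) (hAA' i)

end Discount

lemma norm_average_le_of_norm_le_const {Z F : Type*} [MeasurableSpace Z] [NormedAddCommGroup F]
    [NormedSpace ℝ F] {ν : Measure Z} [IsFiniteMeasure ν] [NeZero ν] {g : Z → F} {C : ℝ}
    (hg : ∀ᵐ z ∂ν, ‖g z‖ ≤ C) : ‖⨍ z, g z ∂ν‖ ≤ C := by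
  have hg' : ∀ᵐ z ∂((ν Set.univ)⁻¹ • ν), ‖g z‖ ≤ C := Measure.ae_smul_measure hg _
  simpa only [average_eq', probReal_univ, mul_one] using norm_integral_le_of_norm_le_const hg'

section JumpDiffusionMean

variable {ι E Z : Type*} [Fintype ι] [AddGroup E] [MeasurableSpace Z] {p : ℝ} {s : ι → E} {y : E}
  {ν : Measure Z} {j : Z → E} {w w' : E → ℝ} {D : ℝ}

/-- The expected value of `w` after one step of a jump-diffusion: with probability `p` the state
moves to `y + s i` or `y - s i`, all equally likely, and with probability `1 - p` it jumps to
`j z`, where `z` has law `ν` normalized to mass one. -/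
def jumpDiffusionMean (p : ℝ) (s : ι → E) (y : E) (ν : Measure Z) (j : Z → E) (w : E → ℝ) : ℝ :=
  p * 𝔼 i, (w (y + s i) + w (y - s i)) / 2 + (1 - p) * ⨍ z, w (j z) ∂ν

lemma abs_jumpDiffusionMean_le [Nonempty ι] [IsFiniteMeasure ν] [NeZero ν]
    (hp : p ∈ Set.Icc 0 1) (hw : ∀ x, |w x| ≤ D) : |jumpDiffusionMean p s y ν j w| ≤ D := by
  have diffusion_le : |𝔼 i, (w (y + s i) + w (y - s i)) / 2| ≤ D :=
    (Finset.abs_expect_le _ _).trans <| Finset.expect_le Finset.univ_nonempty fun i _ => by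
      rw [abs_div, abs_two, div_le_iff₀ two_pos, mul_two]
      exact (abs_add_le _ _).trans (add_le_add (hw _) (hw _))
  have jump_le : |⨍ z, w (j z) ∂ν| ≤ D :=
    norm_average_le_of_norm_le_const (g := fun z => w (j z)) (.of_forall fun z => hw (j z))
  rw [abs_le] at diffusion_le jump_le ⊢
  exact convex_Icc (-D) D diffusion_le jump_le hp.1 (sub_nonneg.mpr hp.2) (add_sub_cancel p 1)

lemma jumpDiffusionMean_sub (hw : Integrable (fun z => w (j z)) ν)
    (hw' : Integrable (fun z => w' (j z)) ν) :
    jumpDiffusionMean p s y ν j (w - w') =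
      jumpDiffusionMean p s y ν j w - jumpDiffusionMean p s y ν j w' := by
  have diffusion_sub : 𝔼 i, ((w - w') (y + s i) + (w - w') (y - s i)) / 2 =
      𝔼 i, (w (y + s i) + w (y - s i)) / 2 - 𝔼 i, (w' (y + s i) + w' (y - s i)) / 2 := by
    rw [← Finset.expect_sub_distrib]
    refine Finset.expect_congr rfl fun i _ => ?_
    simp only [Pi.sub_apply]
    ring
  have jump_sub : ⨍ z, (w - w') (j z) ∂ν = ⨍ z, w (j z) ∂ν - ⨍ z, w' (j z) ∂ν :=
    integral_sub hw.to_average hw'.to_average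
  rw [jumpDiffusionMean, diffusion_sub, jump_sub, jumpDiffusionMean, jumpDiffusionMean]
  ring

lemma abs_jumpDiffusionMean_sub_le [Nonempty ι] [IsFiniteMeasure ν] [NeZero ν]
    (hp : p ∈ Set.Icc 0 1) (hw : Integrable (fun z => w (j z)) ν)
    (hw' : Integrable (fun z => w' (j z)) ν) (hww' : ∀ x, |w x - w' x| ≤ D) :
    |jumpDiffusionMean p s y ν j w - jumpDiffusionMean p s y ν j w'| ≤ D := by
  rw [← jumpDiffusionMean_sub hw hw']
  exact abs_jumpDiffusionMean_le hp hww'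

end JumpDiffusionMean

lemma schemeT_eq_iInf_jumpDiffusionMean {N M d : ℕ} {V : Type*}
    (σ : Euc N → V → Fin d → Euc N) (b : Euc N → V → Euc N)
    (c f : Euc N → V → ℝ) (η : Euc N → V → Euc M → Euc N)
    (ν : Measure (Euc M)) (h : ℝ) (w : Euc N → ℝ) (x : Euc N) :
    schemeT σ b c f η ν h w x =
      ⨅ v, h * f x v + Real.exp (-(h * c x v)) *
        jumpDiffusionMean (Real.exp (-(h * ν.real Set.univ))) (fun m => √h • σ x v m)
          (x + h • b x v) ν (fun z => x + η x v z) w := by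
  refine iInf_congr fun v => ?_
  rw [jumpDiffusionMean, average_eq, Fintype.expect_eq_sum_div_card, ← Finset.sum_div,
    Fintype.card_fin, smul_eq_mul, Measure.real]
  ring

lemma exp_neg_mul_mem_Icc {a b₀ b : ℝ} (ha : 0 ≤ a) (hb : b₀ ≤ b) :
    Real.exp (-(a * b)) ∈ Set.Icc 0 (Real.exp (-(a * b₀))) :=
  ⟨(Real.exp_pos _).le, by gcongr⟩

theorem schemeT_contraction_general {N M d : ℕ} (hd : 0 < d) {V : Type*} [Nonempty V]
    (σ : Euc N → V → Fin d → Euc N) (b : Euc N → V → Euc N)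
    (c f : Euc N → V → ℝ) (η : Euc N → V → Euc M → Euc N)
    (hf : ∀ x, BddBelow (Set.range (f x))) (hη : ∀ x v, Measurable (η x v))
    (ν : Measure (Euc M)) [IsFiniteMeasure ν] (hlam : 0 < (ν Set.univ).toReal)
    (c₀ : ℝ) (hcbd : ∀ x v, c₀ ≤ c x v) (h : ℝ) (hh : 0 ≤ h)
    (w w' : Euc N → ℝ) (hwm : Measurable w) (hw'm : Measurable w')
    (Cw : ℝ) (hw : ∀ x, |w x| ≤ Cw) (hw' : ∀ x, |w' x| ≤ Cw) (x : Euc N) :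
    |schemeT σ b c f η ν h w x - schemeT σ b c f η ν h w' x| ≤
      Real.exp (-(h * c₀)) * ⨆ x' : Euc N, |w x' - w' x'| := by
  have : Nonempty (Fin d) := ⟨⟨0, hd⟩⟩
  have : NeZero ν := ⟨by rintro rfl; exact hlam.ne' (by simp)⟩
  have prob_mem : Real.exp (-(h * ν.real Set.univ)) ∈ Set.Icc 0 1 :=
    ⟨(Real.exp_pos _).le,
      Real.exp_le_one_iff.mpr (neg_nonpos.mpr (mul_nonneg hh measureReal_nonneg))⟩
  have integrable_jump {u : Euc N → ℝ} (hum : Measurable u) (hu : ∀ y, |u y| ≤ Cw) (v : V) :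
      Integrable (fun z => u (x + η x v z)) ν :=
    .of_bound (hum.comp ((hη x v).const_add x)).aestronglyMeasurable Cw (.of_forall fun z => hu _)
  have bddAbove_diff : BddAbove (Set.range fun y => |w y - w' y|) :=
    ⟨Cw + Cw, Set.forall_mem_range.mpr fun y =>
      (abs_sub _ _).trans (add_le_add (hw y) (hw' y))⟩
  have bddBelow_cost : BddBelow (Set.range fun v => h * f x v) := by
    have := (monotone_mul_left_of_nonneg hh).map_bddBelow (hf x)
    rwa [← Set.range_comp] at this
  simp only [schemeT_eq_iInf_jumpDiffusionMean]
  exact abs_iInf_add_mul_sub_iInf_add_mul_le bddBelow_cost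
    (fun v => exp_neg_mul_mem_Icc hh (hcbd x v))
    (fun v => abs_jumpDiffusionMean_le prob_mem hw)
    (fun v => abs_jumpDiffusionMean_sub_le prob_mem (integrable_jump hwm hw v)
      (integrable_jump hw'm hw' v) (le_ciSup bddAbove_diff))

/-- For every `h > 0` the semi-discrete scheme operator `T_h` is a contraction with
factor `e^{-h c₀}` in the supremum norm on bounded Borel functions. -/
theorem schemeT_contraction
    (N M d : ℕ) (hN : 0 < N) (hM : 0 < M) (hd : 0 < d)
    (V : Type*) [MetricSpace V] [CompactSpace V] [Nonempty V]
    (σ : Euc N → V → Fin d → Euc N) (b : Euc N → V → Euc N)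
    (c f : Euc N → V → ℝ) (η : Euc N → V → Euc M → Euc N)
    (hσ : ∀ m : Fin d, Continuous fun p : Euc N × V => σ p.1 p.2 m)
    (hb : Continuous fun p : Euc N × V => b p.1 p.2)
    (hc : Continuous fun p : Euc N × V => c p.1 p.2)
    (hf : Continuous fun p : Euc N × V => f p.1 p.2)
    (hηxv : ∀ z, Continuous fun p : Euc N × V => η p.1 p.2 z)
    (hηz : ∀ x v, Measurable (η x v))
    (ν : Measure (Euc M)) [IsFiniteMeasure ν] (hν0 : ν {0} = 0)
    (hlam : 0 < (ν Set.univ).toReal)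
    (c₀ : ℝ) (hc₀ : 0 < c₀) (hcbd : ∀ x v, c₀ ≤ c x v)
    (h : ℝ) (hh : 0 < h)
    (w w' : Euc N → ℝ) (hwm : Measurable w) (hw'm : Measurable w')
    (Cw : ℝ) (hw : ∀ x, |w x| ≤ Cw) (hw' : ∀ x, |w' x| ≤ Cw) :
    ∀ x : Euc N, |schemeT σ b c f η ν h w x - schemeT σ b c f η ν h w' x| ≤
      Real.exp (-(h * c₀)) * ⨆ x' : Euc N, |w x' - w' x'| :=
  schemeT_contraction_general hd σ b c f η
    (fun x => (isCompact_range (hf.comp (.prodMk_right x))).bddBelow)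
    hηz ν hlam c₀ hcbd h hh.le w w' hwm hw'm Cw hw hw'

end
end

section
/- Comparison principle for the semi-discrete scheme: if u, v : ℝ^N → ℝ are bounded Borel functions with u ≤ T_h u pointwise (u is a subsolution) and v ≥ T_h v pointwise (v is a supersolution), then u ≤ v everywhere on ℝ^N. -/
open MeasureTheory

noncomputable section

/-!
The bracket in `T_h` is the integral of `w` against a probability measure, so `T_h` is the Bellman
operator of a Markov decision problem whose discount factors are at most `γ = exp (-h c₀) < 1`.
Such an operator is monotone and satisfies `T (w + K) ≤ T w + γ K` for constants `K ≥ 0`. Hence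
`u ≤ v + K` improves to `u ≤ T u ≤ T (v + K) ≤ T v + γ K ≤ v + γ K`. For `K = sup (u - v)`, were it
positive, this would give `K ≤ γ K < K`.
-/

section Comparison

variable {X : Type*}

lemma le_of_forall_le_add_imp_le_add_mul {u v : X → ℝ} {γ : ℝ} (hγ : γ < 1)
    (hbdd : BddAbove (Set.range fun x => u x - v x))
    (himprove : ∀ K, 0 ≤ K → (∀ x, u x ≤ v x + K) → ∀ x, u x ≤ v x + γ * K) (x : X) :
    u x ≤ v x := by
  by_contra! hx
  have : Nonempty X := ⟨x⟩
  set K := ⨆ y, (u y - v y)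
  have hK : ∀ y, u y - v y ≤ K := le_ciSup hbdd
  have hK_pos : 0 < K := (sub_pos.2 hx).trans_le (hK x)
  have hle := himprove K hK_pos.le fun y => sub_le_iff_le_add'.1 (hK y)
  have hK_le : K ≤ γ * K := ciSup_le fun y => sub_le_iff_le_add'.2 (hle y)
  exact hK_le.not_gt (mul_lt_of_lt_one_left hK_pos hγ)

end Comparison

section Bellman

variable {X A : Type*} [MeasurableSpace X] {ℓ β : X → A → ℝ} {μ : X → A → Measure X}
  {w u v : X → ℝ} {C D γ K : ℝ}

/-- The Bellman operator of the Markov decision problem with state space `X`, actions `A`, running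
cost `ℓ`, state- and action-dependent discount factor `β` and transition laws `μ`. -/
def bellman (ℓ β : X → A → ℝ) (μ : X → A → Measure X) (w : X → ℝ) (x : X) : ℝ :=
  ⨅ a, ℓ x a + β x a * ∫ y, w y ∂μ x a

lemma integrable_of_abs_le {ρ : Measure X} [IsFiniteMeasure ρ] (hw : Measurable w)
    (hwC : ∀ x, |w x| ≤ C) : Integrable w ρ :=
  .of_bound hw.aestronglyMeasurable C (.of_forall hwC)

lemma integral_le_integral_add_const {ρ : Measure X} [IsProbabilityMeasure ρ]
    (hu : Integrable u ρ) (hv : Integrable v ρ) (huv : ∀ x, u x ≤ v x + K) :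
    ∫ x, u x ∂ρ ≤ ∫ x, v x ∂ρ + K := calc
  ∫ x, u x ∂ρ ≤ ∫ x, (v x + K) ∂ρ := integral_mono hu (hv.add (integrable_const K)) huv
  _ = ∫ x, v x ∂ρ + K := by simp [integral_add hv (integrable_const K)]

lemma bddBelow_range_add_mul_integral [∀ x a, IsProbabilityMeasure (μ x a)] (x : X)
    (hℓ : BddBelow (Set.range (ℓ x))) (hβ₀ : ∀ a, 0 ≤ β x a) (hβ : ∀ a, β x a ≤ γ)
    (hwC : ∀ y, |w y| ≤ C) :
    BddBelow (Set.range fun a => ℓ x a + β x a * ∫ y, w y ∂μ x a) := by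
  obtain ⟨L, hL⟩ := hℓ
  refine ⟨L - γ * C, ?_⟩
  rintro _ ⟨a, rfl⟩
  have hint : |∫ y, w y ∂μ x a| ≤ C := by
    simpa using norm_integral_le_of_norm_le_const (μ := μ x a) (f := w) (.of_forall hwC)
  have hdiscount : |β x a * ∫ y, w y ∂μ x a| ≤ γ * C := by
    rw [abs_mul, abs_of_nonneg (hβ₀ a)]
    exact mul_le_mul (hβ a) hint (abs_nonneg _) ((hβ₀ a).trans (hβ a))
  linarith [hL ⟨a, rfl⟩, neg_le_of_abs_le hdiscount]

lemma bellman_le_bellman_add_mul [Nonempty A] [∀ x a, IsProbabilityMeasure (μ x a)] (x : X)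
    (hℓ : BddBelow (Set.range (ℓ x))) (hβ₀ : ∀ a, 0 ≤ β x a) (hβ : ∀ a, β x a ≤ γ)
    (hu : Measurable u) (hv : Measurable v) (huC : ∀ y, |u y| ≤ C) (hvD : ∀ y, |v y| ≤ D)
    (hK : 0 ≤ K) (huv : ∀ y, u y ≤ v y + K) :
    bellman ℓ β μ u x ≤ bellman ℓ β μ v x + γ * K := by
  refine sub_le_iff_le_add.1 (le_ciInf fun a => sub_le_iff_le_add.2 ?_)
  calc bellman ℓ β μ u x
    _ ≤ ℓ x a + β x a * ∫ y, u y ∂μ x a :=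
        ciInf_le (bddBelow_range_add_mul_integral x hℓ hβ₀ hβ huC) a
    _ ≤ ℓ x a + β x a * (∫ y, v y ∂μ x a + K) := by
        gcongr
        · exact hβ₀ a
        · exact integral_le_integral_add_const (integrable_of_abs_le hu huC)
            (integrable_of_abs_le hv hvD) huv
    _ = ℓ x a + β x a * ∫ y, v y ∂μ x a + β x a * K := by ring
    _ ≤ ℓ x a + β x a * ∫ y, v y ∂μ x a + γ * K := by
        gcongr
        exact hβ a

theorem le_of_le_bellman_of_bellman_le [Nonempty A] [∀ x a, IsProbabilityMeasure (μ x a)]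
    (hℓ : ∀ x, BddBelow (Set.range (ℓ x))) (hβ₀ : ∀ x a, 0 ≤ β x a) (hβ : ∀ x a, β x a ≤ γ)
    (hγ : γ < 1) (hu : Measurable u) (hv : Measurable v) (huC : ∀ x, |u x| ≤ C)
    (hvD : ∀ x, |v x| ≤ D) (hsub : ∀ x, u x ≤ bellman ℓ β μ u x)
    (hsuper : ∀ x, bellman ℓ β μ v x ≤ v x) (x : X) :
    u x ≤ v x := by
  have hbdd : BddAbove (Set.range fun y => u y - v y) := by
    refine ⟨C + D, ?_⟩
    rintro _ ⟨y, rfl⟩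
    linarith [le_of_abs_le (huC y), neg_le_of_abs_le (hvD y)]
  refine le_of_forall_le_add_imp_le_add_mul hγ hbdd (fun K hK huv y => ?_) x
  calc u y
    _ ≤ bellman ℓ β μ u y := hsub y
    _ ≤ bellman ℓ β μ v y + γ * K :=
        bellman_le_bellman_add_mul y (hℓ y) (hβ₀ y) (hβ y) hu hv huC hvD hK huv
    _ ≤ v y + γ * K := by
        gcongr
        exact hsuper y

end Bellman

section WalkJumpLaw

variable {ι E Z : Type*} [Fintype ι] [AddGroup E] [MeasurableSpace E] [MeasurableSpace Z]
  {p : ℝ} {ν : Measure Z} {g : Z → E}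

/-- The law on `E` which, with probability `p`, is uniform on the `2 * card ι` points `y ± s i`
and, with probability `1 - p`, is the image under `g` of the normalization of `ν`. -/
def walkJumpLaw (p : ℝ) (y : E) (s : ι → E) (ν : Measure Z) (g : Z → E) : Measure E :=
  ENNReal.ofReal (p / (2 * Fintype.card ι)) •
      ∑ i, (Measure.dirac (y + s i) + Measure.dirac (y - s i)) +
    ENNReal.ofReal ((1 - p) / ν.real Set.univ) • ν.map g

lemma integral_walkJumpLaw [MeasurableSingletonClass E] (hp₀ : 0 ≤ p) (hp₁ : p ≤ 1) (y : E)
    (s : ι → E) {w : E → ℝ} (hw : Integrable w (ν.map g)) (hg : AEMeasurable g ν) :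
    ∫ e, w e ∂walkJumpLaw p y s ν g =
      p / (2 * Fintype.card ι) * ∑ i, (w (y + s i) + w (y - s i)) +
        (1 - p) / ν.real Set.univ * ∫ z, w (g z) ∂ν := by
  have hdirac (e : E) : Integrable w (Measure.dirac e) := integrable_dirac (by simp)
  have hstep (i : ι) : Integrable w (Measure.dirac (y + s i) + Measure.dirac (y - s i)) :=
    (hdirac _).add_measure (hdirac _)
  have hwalk : ∫ e, w e ∂(∑ i, (Measure.dirac (y + s i) + Measure.dirac (y - s i))) =
      ∑ i, (w (y + s i) + w (y - s i)) := by
    rw [integral_finsetSum_measure fun i _ => hstep i]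
    simp only [integral_add_measure (hdirac _) (hdirac _), integral_dirac]
  rw [walkJumpLaw, integral_add_measure
      ((integrable_finsetSum_measure.2 fun i _ => hstep i).smul_measure ENNReal.ofReal_ne_top)
      (hw.smul_measure ENNReal.ofReal_ne_top),
    integral_smul_measure, integral_smul_measure, hwalk, integral_map hg hw.aestronglyMeasurable,
    ENNReal.toReal_ofReal (by positivity),
    ENNReal.toReal_ofReal (div_nonneg (sub_nonneg.2 hp₁) measureReal_nonneg),
    smul_eq_mul, smul_eq_mul]

lemma isProbabilityMeasure_walkJumpLaw [MeasurableSingletonClass E] [Nonempty ι]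
    [IsFiniteMeasure ν] [NeZero ν] (hp₀ : 0 ≤ p) (hp₁ : p ≤ 1) (y : E) (s : ι → E)
    (hg : AEMeasurable g ν) :
    IsProbabilityMeasure (walkJumpLaw p y s ν g) := by
  have hν : ν.real Set.univ ≠ 0 := measureReal_univ_ne_zero
  refine isProbabilityMeasure_iff_real.2 ?_
  calc (walkJumpLaw p y s ν g).real Set.univ
    _ = ∫ _, (1 : ℝ) ∂walkJumpLaw p y s ν g := by simp
    _ = p / (2 * Fintype.card ι) * ∑ _ : ι, (1 + 1) +
          (1 - p) / ν.real Set.univ * ∫ _, (1 : ℝ) ∂ν :=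
        integral_walkJumpLaw hp₀ hp₁ y s (integrable_const 1) hg
    _ = 1 := by
        simp only [Finset.sum_const, Finset.card_univ, nsmul_eq_mul, integral_const, smul_eq_mul]
        field_simp
        ring

lemma exp_neg_mul_measureReal_le_one {h : ℝ} (hh : 0 ≤ h) (ν : Measure Z) (B : Set Z) :
    Real.exp (-(h * ν.real B)) ≤ 1 :=
  Real.exp_le_one_iff.2 (neg_nonpos.2 (mul_nonneg hh measureReal_nonneg))

end WalkJumpLaw

section Scheme

variable {N M d : ℕ} {V : Type*} {η : Euc N → V → Euc M → Euc N} {ν : Measure (Euc M)} {h : ℝ}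

/-- The law of the controlled chain after one time step of length `h` from `x` under control `a`:
with probability `exp (-h λ)` no jump occurs, and the chain makes a drift-diffusion step. -/
def schemeLaw (σ : Euc N → V → Fin d → Euc N) (b : Euc N → V → Euc N)
    (η : Euc N → V → Euc M → Euc N) (ν : Measure (Euc M)) (h : ℝ) (x : Euc N) (a : V) :
    Measure (Euc N) :=
  walkJumpLaw (Real.exp (-(h * ν.real Set.univ))) (x + h • b x a)
    (fun m => Real.sqrt h • σ x a m) ν (fun z => x + η x a z)

lemma isProbabilityMeasure_schemeLaw [IsFiniteMeasure ν] [NeZero ν] (hd : 0 < d)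
    (σ : Euc N → V → Fin d → Euc N) (b : Euc N → V → Euc N) (hη : ∀ x a, AEMeasurable (η x a) ν)
    (hh : 0 ≤ h) (x : Euc N) (a : V) : IsProbabilityMeasure (schemeLaw σ b η ν h x a) :=
  have : Nonempty (Fin d) := Fin.pos_iff_nonempty.1 hd
  isProbabilityMeasure_walkJumpLaw (Real.exp_nonneg _) (exp_neg_mul_measureReal_le_one hh _ _) _ _
    ((hη x a).const_add x)

lemma schemeT_eq_bellman [IsFiniteMeasure ν] (σ : Euc N → V → Fin d → Euc N)
    (b : Euc N → V → Euc N) (c f : Euc N → V → ℝ) (hη : ∀ x a, AEMeasurable (η x a) ν)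
    (hh : 0 ≤ h) {w : Euc N → ℝ} {C : ℝ} (hw : Measurable w) (hwC : ∀ x, |w x| ≤ C)
    (x : Euc N) :
    schemeT σ b c f η ν h w x = bellman (fun x a => h * f x a)
      (fun x a => Real.exp (-(h * c x a))) (schemeLaw σ b η ν h) w x := by
  simp only [bellman, schemeLaw, integral_walkJumpLaw (Real.exp_nonneg _)
    (exp_neg_mul_measureReal_le_one hh _ _) _ _ (integrable_of_abs_le hw hwC)
    ((hη _ _).const_add _), Fintype.card_fin]
  rfl

end Scheme

theorem schemeT_comparison_general {N M d : ℕ} (hd : 0 < d) {V : Type*} [Nonempty V]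
    (σ : Euc N → V → Fin d → Euc N) (b : Euc N → V → Euc N)
    (c f : Euc N → V → ℝ) (η : Euc N → V → Euc M → Euc N)
    (hf : ∀ x, BddBelow (Set.range (f x)))
    (ν : Measure (Euc M)) [IsFiniteMeasure ν] (hlam : 0 < (ν Set.univ).toReal)
    (hη : ∀ x a, AEMeasurable (η x a) ν)
    {c₀ : ℝ} (hc₀ : 0 < c₀) (hc : ∀ x a, c₀ ≤ c x a) {h : ℝ} (hh : 0 < h)
    {u v : Euc N → ℝ} (hu : Measurable u) (hv : Measurable v)
    {C D : ℝ} (huC : ∀ x, |u x| ≤ C) (hvD : ∀ x, |v x| ≤ D)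
    (hsub : ∀ x, u x ≤ schemeT σ b c f η ν h u x)
    (hsuper : ∀ x, schemeT σ b c f η ν h v x ≤ v x) (x : Euc N) :
    u x ≤ v x := by
  have : NeZero ν := ⟨by rintro rfl; simp at hlam⟩
  have := isProbabilityMeasure_schemeLaw hd σ b hη hh.le
  have hcost (x : Euc N) : BddBelow (Set.range fun a => h * f x a) := by
    simpa only [Set.range_comp'] using
      (monotone_mul_left_of_nonneg hh.le).map_bddBelow (hf x)
  have hdiscount (x : Euc N) (a : V) : Real.exp (-(h * c x a)) ≤ Real.exp (-(h * c₀)) := by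
    gcongr
    exact hc x a
  have hdiscount_lt : Real.exp (-(h * c₀)) < 1 :=
    Real.exp_lt_one_iff.2 (neg_neg_of_pos (mul_pos hh hc₀))
  simp only [schemeT_eq_bellman σ b c f hη hh.le hu huC] at hsub
  simp only [schemeT_eq_bellman σ b c f hη hh.le hv hvD] at hsuper
  exact le_of_le_bellman_of_bellman_le hcost (fun _ _ => Real.exp_nonneg _) hdiscount hdiscount_lt
    hu hv huC hvD hsub hsuper x

/-- Comparison principle for the semi-discrete scheme: a bounded Borel subsolution
`u ≤ T_h u` is dominated by any bounded Borel supersolution `v ≥ T_h v`. -/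
theorem schemeT_comparison
    (N M d : ℕ) (hN : 0 < N) (hM : 0 < M) (hd : 0 < d)
    (V : Type*) [MetricSpace V] [CompactSpace V] [Nonempty V]
    (σ : Euc N → V → Fin d → Euc N) (b : Euc N → V → Euc N)
    (c f : Euc N → V → ℝ) (η : Euc N → V → Euc M → Euc N)
    (hσ : ∀ m : Fin d, Continuous fun p : Euc N × V => σ p.1 p.2 m)
    (hb : Continuous fun p : Euc N × V => b p.1 p.2)
    (hc : Continuous fun p : Euc N × V => c p.1 p.2)
    (hf : Continuous fun p : Euc N × V => f p.1 p.2)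
    (hηxv : ∀ z, Continuous fun p : Euc N × V => η p.1 p.2 z)
    (hηz : ∀ x v, Measurable (η x v))
    (ν : Measure (Euc M)) [IsFiniteMeasure ν] (hν0 : ν {0} = 0)
    (hlam : 0 < (ν Set.univ).toReal)
    (c₀ : ℝ) (hc₀ : 0 < c₀) (hcbd : ∀ x v, c₀ ≤ c x v)
    (h : ℝ) (hh : 0 < h)
    (u v : Euc N → ℝ) (hum : Measurable u) (hvm : Measurable v)
    (Cu : ℝ) (hub : ∀ x, |u x| ≤ Cu) (hvb : ∀ x, |v x| ≤ Cu)
    (hsub : ∀ x, u x ≤ schemeT σ b c f η ν h u x)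
    (hsuper : ∀ x, schemeT σ b c f η ν h v x ≤ v x) :
    ∀ x : Euc N, u x ≤ v x :=
  schemeT_comparison_general hd σ b c f η
    (fun x => (isCompact_range (hf.comp (.prodMk_right x))).bddBelow) ν hlam
    (fun x a => (hηz x a).aemeasurable) hc₀ hcbd hh hum hvm hub hvb hsub hsuper

end
end

section
/- Convexity (condition (C4) with C = 0) of the semi-discrete scheme: for every h > 0, every x ∈ ℝ^N, every bounded Lipschitz function φ : ℝ^N → ℝ, and every mollifier ρ (a nonnegative integrable function on ℝ^N with ∫ρ = 1), one has ∫_{ℝ^N} S(h, x, φ(x−e), φ(· − e)) ρ(e) de ≥ S(h, x, (φ*ρ)(x), φ*ρ), where φ*ρ denotes convolution. -/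
open MeasureTheory

noncomputable section

/-- The abstract form `S(h,x,r,ψ)` of the semi-discrete scheme. -/
noncomputable def schemeS {N M d : ℕ} {V : Type*}
    (σ : Euc N → V → Fin d → Euc N) (b : Euc N → V → Euc N)
    (c f : Euc N → V → ℝ) (η : Euc N → V → Euc M → Euc N)
    (ν : Measure (Euc M)) (h : ℝ) (x : Euc N) (r : ℝ) (ψ : Euc N → ℝ) : ℝ :=
  ⨆ v : V,
    (-(Real.exp (-(h * (ν Set.univ).toReal)) / (2 * (d : ℝ) * h)) *
        ∑ m : Fin d, (ψ (x + h • b x v + Real.sqrt h • σ x v m) - 2 * r +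
          ψ (x + h • b x v - Real.sqrt h • σ x v m)) -
      ((1 - Real.exp (-(h * (ν Set.univ).toReal))) / (h * (ν Set.univ).toReal)) *
        (∫ z, (ψ (x + η x v z) - r) ∂ν) +
      ((Real.exp (h * c x v) - 1) / h) * r - Real.exp (h * c x v) * f x v)

/-!
For each control `v` the expression under the supremum is an affine functional
`(r, ψ) ↦ a r - ∫ (ψ - r) ∂κ - q`, where `κ` is a finite measure: the weighted sum of Dirac masses
at the points `x + h b ± √h σ_m` and of the image of `ν` under `z ↦ x + η z`. By Fubini an affine
functional commutes with averaging against a probability measure, and a supremum of averages is at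
most the average of the supremum. The supremum over `v` may be uncountable; it is measurable because
a supremum of continuous functions is lower semicontinuous.
-/

section Supremum

variable {ι Ω : Type*} [MeasurableSpace Ω] {μ : Measure Ω} [Nonempty ι] {F : ι → Ω → ℝ}

theorem ciSup_integral_le_integral_ciSup (hF : ∀ i, Integrable (F i) μ)
    (hbdd : ∀ ω, BddAbove (Set.range fun i => F i ω))
    (hsup : Integrable (fun ω => ⨆ i, F i ω) μ) :
    ⨆ i, ∫ ω, F i ω ∂μ ≤ ∫ ω, ⨆ i, F i ω ∂μ :=
  ciSup_le fun i => integral_mono (hF i) hsup fun ω => le_ciSup (hbdd ω) i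

theorem abs_ciSup_le {K : ℝ} {g : ι → ℝ} (hg : ∀ i, |g i| ≤ K) : |⨆ i, g i| ≤ K := by
  have hbdd : BddAbove (Set.range g) := ⟨K, Set.forall_mem_range.2 fun i => (abs_le.1 (hg i)).2⟩
  have i₀ := Classical.arbitrary ι
  exact abs_le.2 ⟨(abs_le.1 (hg i₀)).1.trans (le_ciSup hbdd i₀),
    ciSup_le fun i => (abs_le.1 (hg i)).2⟩

theorem ciSup_integral_le_integral_ciSup_of_continuous [TopologicalSpace Ω]
    [OpensMeasurableSpace Ω] [IsFiniteMeasure μ] {K : ℝ} (hF : ∀ i, Continuous (F i))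
    (hK : ∀ i ω, |F i ω| ≤ K) :
    ⨆ i, ∫ ω, F i ω ∂μ ≤ ∫ ω, ⨆ i, F i ω ∂μ := by
  have hbdd (ω : Ω) : BddAbove (Set.range fun i => F i ω) :=
    ⟨K, Set.forall_mem_range.2 fun i => (abs_le.1 (hK i ω)).2⟩
  have hsup : Measurable fun ω => ⨆ i, F i ω :=
    (lowerSemicontinuous_ciSup hbdd fun i => (hF i).lowerSemicontinuous).measurable
  exact ciSup_integral_le_integral_ciSup
    (fun i => .of_bound (hF i).measurable.aestronglyMeasurable K (.of_forall (hK i))) hbdd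
    (.of_bound hsup.aestronglyMeasurable K (.of_forall fun ω => abs_ciSup_le (hK · ω)))

end Supremum

section Density

variable {α : Type*} [MeasurableSpace α] {μ : Measure α} {ρ : α → ℝ}

theorem integral_withDensity_ofReal (hρ : Integrable ρ μ) (hρ0 : ∀ e, 0 ≤ ρ e) (g : α → ℝ) :
    ∫ e, g e ∂μ.withDensity (fun e => ENNReal.ofReal (ρ e)) = ∫ e, g e * ρ e ∂μ := by
  rw [integral_withDensity_eq_integral_toReal_smul₀ hρ.aemeasurable.ennreal_ofReal
    (.of_forall fun _ => ENNReal.ofReal_lt_top)]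
  simp only [ENNReal.toReal_ofReal (hρ0 _), smul_eq_mul, mul_comm]

theorem isProbabilityMeasure_withDensity_ofReal (hρ : Integrable ρ μ) (hρ0 : ∀ e, 0 ≤ ρ e)
    (hρ1 : ∫ e, ρ e ∂μ = 1) :
    IsProbabilityMeasure (μ.withDensity fun e => ENNReal.ofReal (ρ e)) :=
  ⟨by
    rw [withDensity_apply _ MeasurableSet.univ, Measure.restrict_univ,
      ← ofReal_integral_eq_lintegral_ofReal hρ (.of_forall hρ0), hρ1, ENNReal.ofReal_one]⟩

end Density

/-- The affine functional `(r, ψ) ↦ a r - ∫ (ψ - r) ∂κ - q`: minus the generator of the pure jump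
process with jump measure `κ` at the point where `ψ` takes the value `r`, plus the zeroth order term
`a r - q`. As in `schemeS`, the values `r` and `ψ` are independent arguments. -/
def affineJump {E : Type*} [MeasurableSpace E] (κ : Measure E) (a q r : ℝ) (ψ : E → ℝ) : ℝ :=
  a * r - ∫ y, (ψ y - r) ∂κ - q

section AffineJump

variable {E Ω : Type*} [MeasurableSpace E] {κ : Measure E} [IsFiniteMeasure κ] {a q K : ℝ}

theorem abs_affineJump_le {r : ℝ} {ψ : E → ℝ} (hr : |r| ≤ K) (hψ : ∀ y, |ψ y| ≤ K) :
    |affineJump κ a q r ψ| ≤ |a| * K + 2 * K * κ.real Set.univ + |q| := by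
  have hdiff (y : E) : |ψ y - r| ≤ 2 * K := (abs_sub _ _).trans (by linarith [hψ y])
  have hjump : |∫ y, (ψ y - r) ∂κ| ≤ 2 * K * κ.real Set.univ :=
    norm_integral_le_of_norm_le_const (f := fun y => ψ y - r) (.of_forall hdiff)
  calc |affineJump κ a q r ψ|
      ≤ |a * r| + |∫ y, (ψ y - r) ∂κ| + |q| :=
        (abs_sub _ _).trans <| by gcongr; exact abs_sub _ _
    _ ≤ |a| * K + 2 * K * κ.real Set.univ + |q| := by rw [abs_mul]; gcongr

theorem continuous_affineJump [TopologicalSpace Ω] [FirstCountableTopology Ω] {r : Ω → ℝ}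
    {ψ : Ω → E → ℝ} (hr : Continuous r) (hψ : ∀ y, Continuous fun ω => ψ ω y)
    (hψm : ∀ ω, Measurable (ψ ω)) (hrK : ∀ ω, |r ω| ≤ K) (hψK : ∀ ω y, |ψ ω y| ≤ K) :
    Continuous fun ω => affineJump κ a q (r ω) (ψ ω) := by
  have hjump : Continuous fun ω => ∫ y, (ψ ω y - r ω) ∂κ :=
    continuous_of_dominated (bound := fun _ => K + K)
      (fun ω => ((hψm ω).sub_const _).aestronglyMeasurable)
      (fun ω => .of_forall fun y => (norm_sub_le _ _).trans (add_le_add (hψK ω y) (hrK ω)))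
      (integrable_const _) (.of_forall fun y => (hψ y).sub hr)
  exact ((hr.const_mul a).sub hjump).sub continuous_const

theorem integral_affineJump [MeasurableSpace Ω] {μ : Measure Ω} [IsProbabilityMeasure μ]
    {r : Ω → ℝ} {ψ : Ω → E → ℝ} (hr : Integrable r μ)
    (hψ : Integrable (Function.uncurry ψ) (μ.prod κ)) :
    ∫ ω, affineJump κ a q (r ω) (ψ ω) ∂μ =
      affineJump κ a q (∫ ω, r ω ∂μ) (fun y => ∫ ω, ψ ω y ∂μ) := by
  have hdiff : Integrable (Function.uncurry fun ω y => ψ ω y - r ω) (μ.prod κ) :=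
    hψ.sub (hr.comp_fst κ)
  have hjump : ∫ ω, ∫ y, (ψ ω y - r ω) ∂κ ∂μ =
      ∫ y, ((∫ ω, ψ ω y ∂μ) - ∫ ω, r ω ∂μ) ∂κ := by
    rw [integral_integral_swap hdiff]
    refine integral_congr_ae ?_
    filter_upwards [hψ.prod_left_ae] with y hy using integral_sub hy hr
  have hjump_int : Integrable (fun ω => ∫ y, (ψ ω y - r ω) ∂κ) μ := hdiff.integral_prod_left
  have hlin_int : Integrable (fun ω => a * r ω - ∫ y, (ψ ω y - r ω) ∂κ) μ :=
    (hr.const_mul a).sub hjump_int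
  simp only [affineJump]
  rw [integral_sub hlin_int (integrable_const q), integral_sub (hr.const_mul a) hjump_int,
    integral_const_mul, hjump, integral_const, probReal_univ, one_smul]

end AffineJump

theorem ciSup_affineJump_integral_le {ι E Ω : Type*} [Nonempty ι]
    [TopologicalSpace E] [MeasurableSpace E] [OpensMeasurableSpace E]
    [TopologicalSpace Ω] [FirstCountableTopology Ω] [MeasurableSpace Ω] [OpensMeasurableSpace Ω]
    [SecondCountableTopologyEither Ω E] {μ : Measure Ω} [IsProbabilityMeasure μ]
    {κ : ι → Measure E} [∀ i, IsFiniteMeasure (κ i)] {a q : ι → ℝ} {A K Q m : ℝ}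
    (ha : ∀ i, |a i| ≤ A) (hq : ∀ i, |q i| ≤ Q) (hκ : ∀ i, (κ i).real Set.univ ≤ m)
    {r : Ω → ℝ} {ψ : Ω → E → ℝ} (hr : Continuous r)
    (hψ : Continuous (Function.uncurry ψ)) (hrK : ∀ ω, |r ω| ≤ K) (hψK : ∀ ω y, |ψ ω y| ≤ K) :
    ⨆ i, affineJump (κ i) (a i) (q i) (∫ ω, r ω ∂μ) (fun y => ∫ ω, ψ ω y ∂μ) ≤
      ∫ ω, ⨆ i, affineJump (κ i) (a i) (q i) (r ω) (ψ ω) ∂μ := by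
  have hr_int : Integrable r μ :=
    .of_bound hr.measurable.aestronglyMeasurable K (.of_forall hrK)
  have hψ_int (i : ι) : Integrable (Function.uncurry ψ) (μ.prod (κ i)) :=
    .of_bound hψ.measurable.aestronglyMeasurable K (.of_forall fun p => hψK p.1 p.2)
  have hcont (i : ι) : Continuous fun ω => affineJump (κ i) (a i) (q i) (r ω) (ψ ω) :=
    continuous_affineJump hr (fun y => hψ.comp (Continuous.prodMk_left y))
      (fun ω => (hψ.comp (Continuous.prodMk_right ω)).measurable) hrK hψK
  have hbound (i : ι) (ω : Ω) :
      |affineJump (κ i) (a i) (q i) (r ω) (ψ ω)| ≤ A * K + 2 * K * m + Q := by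
    have hK : 0 ≤ K := (abs_nonneg _).trans (hrK ω)
    refine (abs_affineJump_le (hrK ω) (hψK ω)).trans ?_
    gcongr
    exacts [ha i, hκ i, hq i]
  simp only [← integral_affineJump hr_int (hψ_int _)]
  exact ciSup_integral_le_integral_ciSup_of_continuous hcont hbound

theorem abs_exp_sub_one_div_le {h t C : ℝ} (hh : 0 < h) (ht : t ≤ C) :
    |(Real.exp (h * t) - 1) / h| ≤ (Real.exp (h * C) + 1) / h := by
  rw [abs_div, abs_of_pos hh]
  gcongr
  calc |Real.exp (h * t) - 1| ≤ |Real.exp (h * t)| + |1| := abs_sub _ _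
    _ = Real.exp (h * t) + 1 := by rw [Real.abs_exp, abs_one]
    _ ≤ Real.exp (h * C) + 1 := by gcongr

/-- The coefficient `e^{-hλ} / (2dh)` of the diffusion part of `schemeS`, with `λ = ν(E)`. -/
def diffusionWeight {M : ℕ} (d : ℕ) (ν : Measure (Euc M)) (h : ℝ) : ℝ :=
  Real.exp (-(h * (ν Set.univ).toReal)) / (2 * (d : ℝ) * h)

/-- The coefficient `(1 - e^{-hλ}) / (hλ)` of the jump part of `schemeS`, with `λ = ν(E)`. -/
def jumpWeight {M : ℕ} (ν : Measure (Euc M)) (h : ℝ) : ℝ :=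
  (1 - Real.exp (-(h * (ν Set.univ).toReal))) / (h * (ν Set.univ).toReal)

/-- The measure `κ` for which the nonlocal part of `schemeS` at control `v` is `-∫ (ψ - r) ∂κ`.
The weights are nonnegative when `0 < h`, so that `Real.toNNReal` does not truncate them. -/
def schemeMeasure {N M d : ℕ} {V : Type*} (σ : Euc N → V → Fin d → Euc N) (b : Euc N → V → Euc N)
    (η : Euc N → V → Euc M → Euc N) (ν : Measure (Euc M)) (h : ℝ) (x : Euc N) (v : V) :
    Measure (Euc N) :=
  (diffusionWeight d ν h).toNNReal •
      ∑ m : Fin d, (Measure.dirac (x + h • b x v + Real.sqrt h • σ x v m) +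
        Measure.dirac (x + h • b x v - Real.sqrt h • σ x v m)) +
    (jumpWeight ν h).toNNReal • ν.map fun z => x + η x v z

section Scheme

variable {N M d : ℕ} {V : Type*} {σ : Euc N → V → Fin d → Euc N} {b : Euc N → V → Euc N}
  {c f : Euc N → V → ℝ} {η : Euc N → V → Euc M → Euc N} {ν : Measure (Euc M)} {h : ℝ} {x : Euc N}

theorem diffusionWeight_nonneg (hh : 0 ≤ h) : 0 ≤ diffusionWeight d ν h := by
  unfold diffusionWeight
  positivity

theorem jumpWeight_nonneg (hh : 0 ≤ h) : 0 ≤ jumpWeight ν h := by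
  have hexp : Real.exp (-(h * (ν Set.univ).toReal)) ≤ 1 :=
    Real.exp_le_one_iff.2 (neg_nonpos.2 (by positivity))
  exact div_nonneg (sub_nonneg.2 hexp) (by positivity)

variable [IsFiniteMeasure ν]

instance isFiniteMeasure_schemeMeasure (v : V) :
    IsFiniteMeasure (schemeMeasure σ b η ν h x v) := by
  unfold schemeMeasure
  infer_instance

theorem integral_schemeMeasure (hh : 0 ≤ h) {v : V} (hη : Measurable (η x v)) {g : Euc N → ℝ}
    {K : ℝ} (hg : Measurable g) (hK : ∀ y, |g y| ≤ K) :
    ∫ y, g y ∂schemeMeasure σ b η ν h x v =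
      diffusionWeight d ν h * ∑ m : Fin d, (g (x + h • b x v + Real.sqrt h • σ x v m) +
        g (x + h • b x v - Real.sqrt h • σ x v m)) +
      jumpWeight ν h * ∫ z, g (x + η x v z) ∂ν := by
  have hint (κ : Measure (Euc N)) [IsFiniteMeasure κ] : Integrable g κ :=
    .of_bound hg.aestronglyMeasurable K (.of_forall hK)
  rw [schemeMeasure, integral_add_measure (hint _) (hint _), integral_smul_nnreal_measure,
    integral_smul_nnreal_measure, integral_finsetSum_measure fun _ _ => hint _,
    integral_map (by fun_prop) hg.aestronglyMeasurable]
  simp only [integral_add_measure (hint _) (hint _), integral_dirac, NNReal.smul_def,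
    Real.coe_toNNReal _ (diffusionWeight_nonneg hh), Real.coe_toNNReal _ (jumpWeight_nonneg hh),
    smul_eq_mul]

theorem schemeMeasure_real_univ (hh : 0 ≤ h) {v : V} (hη : Measurable (η x v)) :
    (schemeMeasure σ b η ν h x v).real Set.univ =
      diffusionWeight d ν h * (d * 2) + jumpWeight ν h * ν.real Set.univ := by
  have hone := integral_schemeMeasure (σ := σ) (b := b) (ν := ν) hh hη (g := fun _ => 1) (K := 1)
    measurable_const (by simp)
  simpa [one_add_one_eq_two] using hone

theorem schemeS_eq_ciSup_affineJump (hh : 0 ≤ h) (hη : ∀ v, Measurable (η x v)) {r K : ℝ}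
    {ψ : Euc N → ℝ} (hψ : Measurable ψ) (hK : ∀ y, |ψ y| ≤ K) :
    schemeS σ b c f η ν h x r ψ =
      ⨆ v, affineJump (schemeMeasure σ b η ν h x v) ((Real.exp (h * c x v) - 1) / h)
        (Real.exp (h * c x v) * f x v) r ψ := by
  refine iSup_congr fun v => ?_
  have hsub (y : Euc N) : |ψ y - r| ≤ K + |r| := (abs_sub _ _).trans (by gcongr; exact hK y)
  rw [affineJump, integral_schemeMeasure hh (hη v) (hψ.sub_const r) hsub, diffusionWeight,
    jumpWeight]
  have hsecond (y y' : Euc N) : ψ y - 2 * r + ψ y' = ψ y - r + (ψ y' - r) := by ring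
  simp only [hsecond]
  ring

theorem schemeS_convexity_general {Ω : Type*} [TopologicalSpace Ω] [FirstCountableTopology Ω]
    [MeasurableSpace Ω] [OpensMeasurableSpace Ω] {μ : Measure Ω} [IsProbabilityMeasure μ]
    [Nonempty V] (hη : ∀ v, Measurable (η x v)) {C F K : ℝ} (hc : ∀ v, c x v ≤ C)
    (hf : ∀ v, |f x v| ≤ F) (hh : 0 < h) {r : Ω → ℝ} {ψ : Ω → Euc N → ℝ} (hr : Continuous r)
    (hψ : Continuous (Function.uncurry ψ)) (hrK : ∀ ω, |r ω| ≤ K) (hψK : ∀ ω y, |ψ ω y| ≤ K) :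
    schemeS σ b c f η ν h x (∫ ω, r ω ∂μ) (fun y => ∫ ω, ψ ω y ∂μ) ≤
      ∫ ω, schemeS σ b c f η ν h x (r ω) (ψ ω) ∂μ := by
  have hψm (ω : Ω) : Measurable (ψ ω) := (hψ.comp (Continuous.prodMk_right ω)).measurable
  have havg : Measurable fun y => ∫ ω, ψ ω y ∂μ :=
    hψ.measurable.stronglyMeasurable.integral_prod_left.measurable
  have havgK (y : Euc N) : |∫ ω, ψ ω y ∂μ| ≤ K := by
    simpa using norm_integral_le_of_norm_le_const (μ := μ) (f := (ψ · y)) (.of_forall (hψK · y))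
  have hq (v : V) : |Real.exp (h * c x v) * f x v| ≤ Real.exp (h * C) * F := by
    rw [abs_mul, Real.abs_exp]
    gcongr
    exacts [hc v, hf v]
  simp only [schemeS_eq_ciSup_affineJump hh.le hη havg havgK,
    fun ω => schemeS_eq_ciSup_affineJump (σ := σ) (b := b) (c := c) (f := f) (ν := ν) (r := r ω)
      hh.le hη (hψm ω) (hψK ω)]
  exact ciSup_affineJump_integral_le (fun v => abs_exp_sub_one_div_le hh (hc v)) hq
    (fun v => (schemeMeasure_real_univ hh.le (hη v)).le) hr hψ hrK hψK

end Scheme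

/-- Convexity (condition (C4) with `C = 0`) of the semi-discrete scheme: averaging the
scheme over translations by a mollifier dominates the scheme applied to the mollified
function. -/
theorem schemeS_convexity
    (N M d : ℕ) (hN : 0 < N) (hM : 0 < M) (hd : 0 < d)
    (V : Type*) [MetricSpace V] [CompactSpace V] [Nonempty V]
    (σ : Euc N → V → Fin d → Euc N) (b : Euc N → V → Euc N)
    (c f : Euc N → V → ℝ) (η : Euc N → V → Euc M → Euc N)
    (hσ : ∀ m : Fin d, Continuous fun p : Euc N × V => σ p.1 p.2 m)
    (hb : Continuous fun p : Euc N × V => b p.1 p.2)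
    (hc : Continuous fun p : Euc N × V => c p.1 p.2)
    (hf : Continuous fun p : Euc N × V => f p.1 p.2)
    (hηxv : ∀ z, Continuous fun p : Euc N × V => η p.1 p.2 z)
    (hηz : ∀ x v, Measurable (η x v))
    (Cb : ℝ) (hσbd : ∀ x v (m : Fin d), ‖σ x v m‖ ≤ Cb) (hbbd : ∀ x v, ‖b x v‖ ≤ Cb)
    (hcbd : ∀ x v, |c x v| ≤ Cb) (hfbd : ∀ x v, |f x v| ≤ Cb)
    (hηbd : ∀ x v z, ‖η x v z‖ ≤ Cb)
    (ν : Measure (Euc M)) [IsFiniteMeasure ν] (hν0 : ν {0} = 0)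
    (hlampos : 0 < (ν Set.univ).toReal)
    (h : ℝ) (hh : 0 < h) (x : Euc N)
    (φ : Euc N → ℝ) (Bφ Lφ : ℝ) (hφb : ∀ y, |φ y| ≤ Bφ)
    (hφlip : LipschitzWith (Real.toNNReal Lφ) φ)
    (ρ : Euc N → ℝ) (hρ0 : ∀ e, 0 ≤ ρ e) (hρint : Integrable ρ volume)
    (hρ1 : (∫ e, ρ e) = 1) :
    (∫ e, schemeS σ b c f η ν h x (φ (x - e)) (fun y => φ (y - e)) * ρ e) ≥
      schemeS σ b c f η ν h x (∫ e, φ (x - e) * ρ e)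
        (fun y => ∫ e, φ (y - e) * ρ e) := by
  have hφ := hφlip.continuous
  have := isProbabilityMeasure_withDensity_ofReal hρint hρ0 hρ1
  simpa only [integral_withDensity_ofReal hρint hρ0] using
    schemeS_convexity_general (μ := volume.withDensity fun e => ENNReal.ofReal (ρ e)) (hηz x)
      (r := fun e => φ (x - e)) (ψ := fun e y => φ (y - e)) (fun v => (abs_le.1 (hcbd x v)).2)
      (hfbd x) hh (by fun_prop) (by fun_prop) (fun _ => hφb _) fun _ _ => hφb _

end
end

section
/- Monotonicity (condition (C1)) of the semi-discrete scheme: assume c(x,v) ≥ c₀ > 0 for all x, v. Then for every h > 0, x ∈ ℝ^N, ζ ∈ ℝ, τ > 0, and all bounded Borel functions u, v : ℝ^N → ℝ with u ≤ v pointwise, one has S(h, x, ζ + τ, u + τ) ≥ S(h, x, ζ, v) + c₀ τ. -/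
open MeasureTheory

noncomputable section

/- The bracket inside the supremum is `-L(r, ψ) + D(r)`, with `L` the discretised generator and `D`
the discount part. `L` is increasing in `ψ` and sees only differences `ψ - r`, so adding `τ` to both
leaves it unchanged, while `D` grows by `(e^{hc} - 1) / h * τ ≥ c τ ≥ c₀ τ`. This gives the
inequality for each control, and it passes to the suprema because the left-hand side
`S(h, x, ζ + τ, u + τ)` is a supremum of a family bounded above: replacing `u` by a constant lower
bound makes `L` independent of the control. -/

lemma one_sub_exp_neg_div_nonneg (t : ℝ) : 0 ≤ (1 - Real.exp (-t)) / t := by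
  rcases le_total 0 t with ht | ht
  · exact div_nonneg (sub_nonneg.2 (Real.exp_le_one_iff.2 (neg_nonpos.2 ht))) ht
  · exact div_nonneg_of_nonpos (sub_nonpos.2 (Real.one_le_exp (neg_nonneg.2 ht))) ht

lemma le_exp_mul_sub_one_div {h : ℝ} (hh : 0 < h) (a : ℝ) : a ≤ (Real.exp (h * a) - 1) / h := by
  rw [le_div_iff₀ hh]
  linarith [Real.add_one_le_exp (h * a)]

lemma integrable_comp_of_abs_le {Z E : Type*} [MeasurableSpace Z] [MeasurableSpace E]
    {ν : Measure Z} [IsFiniteMeasure ν] {ψ : E → ℝ} {g : Z → E} {C : ℝ} (hψ : Measurable ψ)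
    (hψC : ∀ y, |ψ y| ≤ C) (hg : Measurable g) : Integrable (fun z => ψ (g z)) ν :=
  .of_bound (hψ.comp hg).aestronglyMeasurable C (.of_forall fun z => hψC (g z))

section Generator

variable {d : ℕ} {E Z : Type*} [AddCommGroup E] [Module ℝ E] [MeasurableSpace Z]

/-- The discretised generator of the jump diffusion for one fixed control, evaluated at `x` with
`r` in the place of `ψ x`: the central differences of the diffusion, along the columns `σ m`, are
weighted by the probability `e^{-hλ}` of no jump before time `h`, where `λ = ν(Z)`, and the jumps
by the complementary probability. -/
def discreteGenerator (σ : Fin d → E) (b : E) (η : Z → E) (ν : Measure Z) (h : ℝ) (x : E)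
    (r : ℝ) (ψ : E → ℝ) : ℝ :=
  Real.exp (-(h * (ν Set.univ).toReal)) / (2 * (d : ℝ) * h) *
      ∑ m : Fin d, (ψ (x + h • b + √h • σ m) - 2 * r + ψ (x + h • b - √h • σ m)) +
    (1 - Real.exp (-(h * (ν Set.univ).toReal))) / (h * (ν Set.univ).toReal) *
      ∫ z, (ψ (x + η z) - r) ∂ν

variable (σ : Fin d → E) (b : E) {η : Z → E} {ν : Measure Z} {h : ℝ} {x : E}

lemma discreteGenerator_mono [IsFiniteMeasure ν] (hh : 0 ≤ h) (r : ℝ) {φ ψ : E → ℝ}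
    (hφ : Integrable (fun z => φ (x + η z)) ν) (hψ : Integrable (fun z => ψ (x + η z)) ν)
    (hφψ : φ ≤ ψ) :
    discreteGenerator σ b η ν h x r φ ≤ discreteGenerator σ b η ν h x r ψ := by
  have hjump : ∫ z, (φ (x + η z) - r) ∂ν ≤ ∫ z, (ψ (x + η z) - r) ∂ν :=
    integral_mono (hφ.sub (integrable_const r)) (hψ.sub (integrable_const r))
      fun z => sub_le_sub_right (hφψ _) r
  unfold discreteGenerator
  gcongr
  · exact hφψ _
  · exact hφψ _
  · exact one_sub_exp_neg_div_nonneg _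

lemma discreteGenerator_add_const (r τ : ℝ) (ψ : E → ℝ) :
    discreteGenerator σ b η ν h x (r + τ) (fun y => ψ y + τ) =
      discreteGenerator σ b η ν h x r ψ := by
  have hjump (y : E) : ψ y + τ - (r + τ) = ψ y - r := by ring
  have hdiff (y y' : E) : ψ y + τ - 2 * (r + τ) + (ψ y' + τ) = ψ y - 2 * r + ψ y' := by ring
  simp only [discreteGenerator, hjump, hdiff]

variable (η ν h x) in
lemma discreteGenerator_const (r K : ℝ) :
    discreteGenerator σ b η ν h x r (fun _ => K) =
      discreteGenerator (0 : Fin d → E) 0 (0 : Z → E) ν h 0 r (fun _ => K) :=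
  rfl

end Generator

/-- The zeroth-order part of the scheme for one fixed control: discounting of the value `r` at
rate `c` over a step `h`, minus the discounted running cost `f`. -/
def discountTerm (h c f r : ℝ) : ℝ :=
  (Real.exp (h * c) - 1) / h * r - Real.exp (h * c) * f

lemma discountTerm_add_mul_le {h c₀ c τ : ℝ} (hh : 0 < h) (hc : c₀ ≤ c) (hτ : 0 ≤ τ)
    (f r : ℝ) : discountTerm h c f r + c₀ * τ ≤ discountTerm h c f (r + τ) := by
  have hrate : c₀ * τ ≤ (Real.exp (h * c) - 1) / h * τ :=
    mul_le_mul_of_nonneg_right (hc.trans (le_exp_mul_sub_one_div hh c)) hτ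
  unfold discountTerm
  linarith

lemma discountTerm_le {h c c₁ f f₀ : ℝ} (hh : 0 ≤ h) (hc : c ≤ c₁) (hf : f₀ ≤ f) (r : ℝ) :
    discountTerm h c f r ≤ Real.exp (h * c₁) * |r / h - f₀| - r / h :=
  calc discountTerm h c f r
      = Real.exp (h * c) * (r / h - f) - r / h := by unfold discountTerm; ring
    _ ≤ Real.exp (h * c) * |r / h - f₀| - r / h := by
      gcongr
      exact (sub_le_sub_left hf _).trans (le_abs_self _)
    _ ≤ Real.exp (h * c₁) * |r / h - f₀| - r / h := by gcongr

section Scheme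

variable {N M d : ℕ} {V : Type*} {σ : Euc N → V → Fin d → Euc N} {b : Euc N → V → Euc N}
  {c f : Euc N → V → ℝ} {η : Euc N → V → Euc M → Euc N} {ν : Measure (Euc M)} {h : ℝ} {x : Euc N}

variable (σ b c f η ν h x) in
lemma schemeS_eq_iSup (r : ℝ) (ψ : Euc N → ℝ) :
    schemeS σ b c f η ν h x r ψ =
      ⨆ w, (-discreteGenerator (σ x w) (b x w) (η x w) ν h x r ψ +
        discountTerm h (c x w) (f x w) r) := by
  unfold schemeS discreteGenerator discountTerm
  congr! 2
  ring

lemma bddAbove_range_neg_discreteGenerator_add_discountTerm [IsFiniteMeasure ν]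
    (hh : 0 ≤ h) (hc : BddAbove (Set.range (c x))) (hf : BddBelow (Set.range (f x)))
    {ψ : Euc N → ℝ} (hψ : BddBelow (Set.range ψ))
    (hψη : ∀ w, Integrable (fun z => ψ (x + η x w z)) ν) (r s : ℝ) :
    BddAbove (Set.range fun w =>
      -discreteGenerator (σ x w) (b x w) (η x w) ν h x r ψ +
        discountTerm h (c x w) (f x w) s) := by
  obtain ⟨c₁, hc₁⟩ := hc
  obtain ⟨f₀, hf₀⟩ := hf
  obtain ⟨K, hK⟩ := hψ
  refine ⟨-discreteGenerator (0 : Fin d → Euc N) 0 (0 : Euc M → Euc N) ν h 0 r (fun _ => K) +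
    (Real.exp (h * c₁) * |s / h - f₀| - s / h), Set.forall_mem_range.2 fun w => ?_⟩
  refine add_le_add (neg_le_neg ?_) (discountTerm_le hh (hc₁ ⟨w, rfl⟩) (hf₀ ⟨w, rfl⟩) s)
  rw [← discreteGenerator_const (σ x w) (b x w) (η x w) ν h x]
  exact discreteGenerator_mono _ _ hh r (integrable_const K) (hψη w) fun y => hK ⟨y, rfl⟩

theorem schemeS_monotonicity_general [Nonempty V] [IsFiniteMeasure ν] {c₀ : ℝ}
    (hc₀ : ∀ w, c₀ ≤ c x w) (hc : BddAbove (Set.range (c x))) (hf : BddBelow (Set.range (f x)))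
    (hh : 0 < h) (ζ : ℝ) {τ : ℝ} (hτ : 0 ≤ τ) {u v : Euc N → ℝ} (hu : BddBelow (Set.range u))
    (huη : ∀ w, Integrable (fun z => u (x + η x w z)) ν)
    (hvη : ∀ w, Integrable (fun z => v (x + η x w z)) ν) (huv : u ≤ v) :
    schemeS σ b c f η ν h x ζ v + c₀ * τ ≤
      schemeS σ b c f η ν h x (ζ + τ) (fun y => u y + τ) := by
  simp only [schemeS_eq_iSup, discreteGenerator_add_const]
  have hbdd := bddAbove_range_neg_discreteGenerator_add_discountTerm (σ := σ) (b := b)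
    hh.le hc hf hu huη ζ (ζ + τ)
  rw [← le_sub_iff_add_le]
  refine ciSup_le fun w => le_sub_iff_add_le.2 (le_ciSup_of_le hbdd w ?_)
  rw [add_assoc]
  exact add_le_add (neg_le_neg (discreteGenerator_mono _ _ hh.le ζ (huη w) (hvη w) huv))
    (discountTerm_add_mul_le hh (hc₀ w) hτ _ ζ)

end Scheme

/-- Monotonicity (condition (C1)) of the semi-discrete scheme: if `u ≤ v` are bounded
Borel functions, `τ > 0` and `c ≥ c₀ > 0`, then
`S(h, x, ζ + τ, u + τ) ≥ S(h, x, ζ, v) + c₀ τ`. -/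
theorem schemeS_monotonicity
    (N M d : ℕ) (hN : 0 < N) (hM : 0 < M) (hd : 0 < d)
    (V : Type*) [MetricSpace V] [CompactSpace V] [Nonempty V]
    (σ : Euc N → V → Fin d → Euc N) (b : Euc N → V → Euc N)
    (c f : Euc N → V → ℝ) (η : Euc N → V → Euc M → Euc N)
    (hσ : ∀ m : Fin d, Continuous fun p : Euc N × V => σ p.1 p.2 m)
    (hb : Continuous fun p : Euc N × V => b p.1 p.2)
    (hc : Continuous fun p : Euc N × V => c p.1 p.2)
    (hf : Continuous fun p : Euc N × V => f p.1 p.2)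
    (hηxv : ∀ z, Continuous fun p : Euc N × V => η p.1 p.2 z)
    (hηz : ∀ x v, Measurable (η x v))
    (Cb : ℝ) (hσbd : ∀ x v (m : Fin d), ‖σ x v m‖ ≤ Cb) (hbbd : ∀ x v, ‖b x v‖ ≤ Cb)
    (hcbd : ∀ x v, |c x v| ≤ Cb) (hfbd : ∀ x v, |f x v| ≤ Cb)
    (hηbd : ∀ x v z, ‖η x v z‖ ≤ Cb)
    (ν : Measure (Euc M)) [IsFiniteMeasure ν] (hν0 : ν {0} = 0)
    (hlampos : 0 < (ν Set.univ).toReal)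
    (c₀ : ℝ) (hc₀ : 0 < c₀) (hcge : ∀ x v, c₀ ≤ c x v)
    (h : ℝ) (hh : 0 < h) (x : Euc N) (ζ τ : ℝ) (hτ : 0 < τ)
    (u v : Euc N → ℝ) (hum : Measurable u) (hvm : Measurable v)
    (Cu : ℝ) (hub : ∀ y, |u y| ≤ Cu) (hvb : ∀ y, |v y| ≤ Cu)
    (huv : ∀ y, u y ≤ v y) :
    schemeS σ b c f η ν h x (ζ + τ) (fun y => u y + τ) ≥
      schemeS σ b c f η ν h x ζ v + c₀ * τ := by
  exact schemeS_monotonicity_general (hcge x)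
    ⟨Cb, Set.forall_mem_range.2 fun w => (abs_le.1 (hcbd x w)).2⟩
    ⟨-Cb, Set.forall_mem_range.2 fun w => (abs_le.1 (hfbd x w)).1⟩ hh ζ hτ.le
    ⟨-Cu, Set.forall_mem_range.2 fun y => (abs_le.1 (hub y)).1⟩
    (fun w => integrable_comp_of_abs_le hum hub ((hηz x w).const_add x))
    (fun w => integrable_comp_of_abs_le hvm hvb ((hηz x w).const_add x)) huv

end
end
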